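/- Every Frobenius complement has non-trivial center. In particular, if H is a Frobenius complement of even order, then H contains a unique involution, which is central in H. -/

import Mathlib

/-!
For a Frobenius complement `H` of `G`, characters of `H` extend to `G` in such a way that the
irreducible ones remain irreducible, and the coefficients of the central idempotent of `ℂ[G]`
belonging to these extensions are supported on the Frobenius kernel `K`; hence `K` is a normal
subgroup. As `|H|` and `|K|` are coprime, Frattini's argument and the Schur-Zassenhaus theorem
provide a complement of `K`, isomorphic to `H`, which normalizes the center `A` of a Sylow subgroup
of `K` and acts on it by conjugation without fixed points.

An involution can act on the abelian group `A` only as inversion, so it is unique and hence central.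
If `|H|` is odd: the elements of a nontrivial subgroup of `H` sum to zero as endomorphisms of `A`,
so for nontrivial `C ≤ H` normalized by `b ∉ C` the elements of the coset `C * b` cannot all have
trivial `p`-th power. Hence the Sylow subgroups of `H` are cyclic. Then the commutator subgroup of
`H` is cyclic of order coprime to its index, and an element of prime order dividing that index
commutes with it, which makes the element central.
-/

/-- Functions on a group that are constant on conjugacy classes. -/
def IsClassFunction {G α : Type*} [Group G] (f : G → α) : Prop :=
  ∀ x g, f (x * g * x⁻¹) = f g

theorem isClassFunction_character {k G V : Type*} [Field k] [Group G] [AddCommGroup V]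
    [Module k V] (ρ : Representation k G V) : IsClassFunction ρ.character :=
  fun x g => ρ.char_conj g x

theorem exists_groupAlgebra_algEquiv_pi_matrix (k G : Type*) [Field k] [IsAlgClosed k] [Group G]
    [Finite G] [NeZero (Nat.card G : k)] :
    ∃ (a : ℕ) (n : Fin a → ℕ), (∀ i, NeZero (n i)) ∧
      Nonempty (MonoidAlgebra k G ≃ₐ[k] ∀ i, Matrix (Fin (n i)) (Fin (n i)) k) := by
  have := Module.Basis.finiteDimensional_of_finite (MonoidAlgebra.basis G k)
  exact IsSemisimpleRing.exists_algEquiv_pi_matrix_of_isAlgClosed k (MonoidAlgebra k G)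

section BlockCharacters

variable {k G ι : Type*} [Field k] [Group G] {n : ι → Type*} [∀ i, Fintype (n i)]
  [∀ i, DecidableEq (n i)] (E : MonoidAlgebra k G ≃ₐ[k] ∀ i, Matrix (n i) (n i) k)

/-- The representation of `G` on column vectors of the `i`-th matrix block of a decomposition `E`
of its group algebra. -/
noncomputable def blockRep (i : ι) : Representation k G (n i → k) :=
  (Matrix.toLinAlgEquiv' (R := k) (n := n i)).toAlgHom.toMonoidHom.comp <|
    (Pi.evalMonoidHom (fun i => Matrix (n i) (n i) k) i).comp <|
      E.toAlgHom.toMonoidHom.comp (MonoidAlgebra.of k G)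

theorem character_blockRep (i : ι) (g : G) :
    (blockRep E i).character g = (E (MonoidAlgebra.single g 1) i).trace :=
  Matrix.trace_toLin'_eq _

/-- The central idempotent of the group algebra projecting onto the blocks in `I`. -/
noncomputable def blockIdempotent [DecidableEq ι] (I : Finset ι) : MonoidAlgebra k G :=
  E.symm fun i => if i ∈ I then 1 else 0

theorem isIdempotentElem_blockIdempotent [DecidableEq ι] (I : Finset ι) :
    IsIdempotentElem (blockIdempotent E I) := by
  rw [IsIdempotentElem, blockIdempotent, ← map_mul]
  congr 1
  ext1 i
  by_cases hi : i ∈ I <;> simp [hi]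

theorem mem_center_of_isClassFunction_coeff {x : MonoidAlgebra k G}
    (hx : IsClassFunction x.coeff) : x ∈ Set.center (MonoidAlgebra k G) := by
  rw [Semigroup.mem_center_iff]
  intro y
  induction y using MonoidAlgebra.induction_on with
  | of g =>
    ext a
    simpa [mul_assoc] using (hx g (g⁻¹ * a)).symm
  | add y z hy hz => rw [mul_add, add_mul, hy, hz]
  | smul c y hy => rw [mul_smul_comm, smul_mul_assoc, hy]

theorem exists_block_eq_smul_one_of_mem_center {x : MonoidAlgebra k G}
    (hx : x ∈ Set.center (MonoidAlgebra k G)) (i : ι) : ∃ c : k, E x i = c • 1 := by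
  have E_mem_center : E x ∈ Set.center (∀ i, Matrix (n i) (n i) k) := by
    rw [Semigroup.mem_center_iff] at hx ⊢
    exact E.surjective.forall.2 fun y => by rw [← map_mul, ← map_mul, hx]
  rw [Set.center_pi] at E_mem_center
  have block_mem_center : E x i ∈ Set.center (Matrix (n i) (n i) k) := E_mem_center i trivial
  rw [Matrix.center_eq_scalar_image] at block_mem_center
  obtain ⟨c, -, hc⟩ := block_mem_center
  exact ⟨c, by rw [← hc, Matrix.scalar_apply, Matrix.smul_one_eq_diagonal]⟩

theorem trace_lmul_pi_matrix [Fintype ι] (x : ∀ i, Matrix (n i) (n i) k) :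
    LinearMap.trace k _ (Algebra.lmul k _ x) = ∑ i, (Fintype.card (n i) : k) * (x i).trace := by
  classical
  let b := Pi.basis fun i => Matrix.stdBasis k (n i) (n i)
  have diag_eq (i : ι) (p q : n i) :
      Algebra.leftMulMatrix b x ⟨i, p, q⟩ ⟨i, p, q⟩ = x i p p := by
    have repr_eq (y : Matrix (n i) (n i) k) :
        (Matrix.stdBasis k (n i) (n i)).repr y (p, q) = y p q := rfl
    simp [b, Algebra.leftMulMatrix_eq_repr_mul, Matrix.stdBasis_eq_single, Pi.basis_repr, repr_eq]
  rw [LinearMap.trace_eq_matrix_trace k b, ← Algebra.leftMulMatrix_apply,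
    Matrix.trace, Fintype.sum_sigma]
  simp [Fintype.sum_prod_type, diag_eq, Matrix.trace, Finset.mul_sum]

theorem trace_block_eq_sum [Fintype G] (x : MonoidAlgebra k G) (i : ι) :
    (E x i).trace = ∑ g, x.coeff g * (blockRep E i).character g := by
  have x_eq : x = ∑ g, x.coeff g • MonoidAlgebra.single g (1 : k) := by
    ext g
    simp [MonoidAlgebra.coeff_sum]
  conv_lhs => rw [x_eq]
  simp only [map_sum, map_smul, Finset.sum_apply, Pi.smul_apply, Matrix.trace_sum,
    Matrix.trace_smul, smul_eq_mul, character_blockRep]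

variable [Finite G]

theorem trace_lmul_monoidAlgebra (x : MonoidAlgebra k G) :
    LinearMap.trace k _ (Algebra.lmul k _ x) = Nat.card G * x.coeff 1 := by
  classical
  have := Fintype.ofFinite G
  let b := MonoidAlgebra.basis G k
  have diag_eq (g : G) : Algebra.leftMulMatrix b x g g = x.coeff 1 := by
    have basis_eq : b g = MonoidAlgebra.single g 1 := rfl
    have repr_eq (y : MonoidAlgebra k G) : b.repr y = y.coeff := rfl
    simp [Algebra.leftMulMatrix_eq_repr_mul, basis_eq, repr_eq]
  rw [LinearMap.trace_eq_matrix_trace k b, ← Algebra.leftMulMatrix_apply]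
  simp [Matrix.trace, diag_eq]

theorem card_mul_coeff_eq_sum_trace [Fintype ι] (x : MonoidAlgebra k G) (g : G) :
    Nat.card G * x.coeff g =
      ∑ i, (Fintype.card (n i) : k) * (E (x * MonoidAlgebra.single g⁻¹ 1) i).trace := by
  have conj_lmul (y : MonoidAlgebra k G) :
      E.toLinearEquiv.conj (Algebra.lmul k _ y) = Algebra.lmul k _ (E y) :=
    LinearMap.ext fun z => by simp [LinearEquiv.conj_apply]
  rw [← trace_lmul_pi_matrix, ← conj_lmul, LinearMap.trace_conj', trace_lmul_monoidAlgebra]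
  simp

theorem sum_card_mul_character_blockRep [Fintype ι] [DecidableEq G] (g : G) :
    ∑ i, (Fintype.card (n i) : k) * (blockRep E i).character g =
      if g = 1 then (Nat.card G : k) else 0 := by
  have regular := card_mul_coeff_eq_sum_trace E 1 g⁻¹
  rw [one_mul, inv_inv] at regular
  simp only [character_blockRep]
  rw [← regular]
  simp [MonoidAlgebra.one_def, Finsupp.single_apply, eq_comm]

theorem card_mul_coeff_blockIdempotent [Finite ι] [DecidableEq ι] (I : Finset ι) (g : G) :
    Nat.card G * (blockIdempotent E I).coeff g =
      ∑ i ∈ I, (Fintype.card (n i) : k) * (blockRep E i).character g⁻¹ := by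
  have := Fintype.ofFinite ι
  rw [card_mul_coeff_eq_sum_trace E]
  simp [blockIdempotent, character_blockRep, ite_mul, apply_ite Matrix.trace]

end BlockCharacters

section CharPairing

variable {k G : Type*} [Field k] [Group G] [Fintype G]

/-- The bilinear form `⟪f, φ⟫ = |G|⁻¹ ∑ f(g⁻¹) φ(g)`; on characters it agrees with the Hermitian
inner product, without any conjugation on `k`. -/
noncomputable def charPairing : LinearMap.BilinForm k (G → k) :=
  LinearMap.mk₂ k (fun f φ => (Nat.card G : k)⁻¹ * ∑ g, f g⁻¹ * φ g)
    (fun f f' φ => by simp [add_mul, Finset.sum_add_distrib, mul_add])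
    (fun c f φ => by simp [Finset.mul_sum, mul_assoc, mul_left_comm])
    (fun f φ φ' => by simp [Finset.sum_add_distrib, mul_add])
    (fun c f φ => by simp [Finset.mul_sum, mul_left_comm])

theorem charPairing_apply (f φ : G → k) :
    charPairing f φ = (Nat.card G : k)⁻¹ * ∑ g, f g⁻¹ * φ g :=
  rfl

theorem charPairing_comm (f φ : G → k) : charPairing f φ = charPairing φ f := by
  rw [charPairing_apply, charPairing_apply, ← Equiv.sum_comp (Equiv.inv G)]
  simp [mul_comm]

theorem charPairing_character_eq_finrank [NeZero (Nat.card G : k)] {V W : Type*} [AddCommGroup V]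
    [Module k V] [FiniteDimensional k V] [AddCommGroup W] [Module k W] [FiniteDimensional k W]
    (ρ : Representation k G V) (σ : Representation k G W) :
    charPairing ρ.character σ.character = Module.finrank k (ρ.IntertwiningMap σ) := by
  have : Invertible (Nat.card G : k) := invertibleOfNonzero (NeZero.ne _)
  simp [charPairing_apply, ← Representation.card_inv_mul_sum_char_mul_char_eq_finrank, mul_comm]

variable {ι : Type*} {n : ι → Type*} [∀ i, Fintype (n i)] [∀ i, DecidableEq (n i)]
  (E : MonoidAlgebra k G ≃ₐ[k] ∀ i, Matrix (n i) (n i) k)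

theorem charPairing_blockRep [CharZero k] [Finite ι] [DecidableEq ι] [∀ i, Nonempty (n i)]
    (i j : ι) :
    charPairing (blockRep E i).character (blockRep E j).character = if i = j then 1 else 0 := by
  have := Fintype.ofFinite ι
  have card_ne_zero : (Fintype.card (n i) : k) ≠ 0 := by simp
  have coeff_eq (g : G) : (blockIdempotent E {i}).coeff g =
      (Nat.card G : k)⁻¹ * (Fintype.card (n i) * (blockRep E i).character g⁻¹) := by
    rw [eq_inv_mul_iff_mul_eq₀ (by simp), card_mul_coeff_blockIdempotent, Finset.sum_singleton]
  have trace_eq := trace_block_eq_sum E (blockIdempotent E {i}) j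
  have trace_eq_card : (E (blockIdempotent E {i}) j).trace =
      (Fintype.card (n i) : k) * if i = j then 1 else 0 := by
    by_cases hij : i = j
    · subst hij
      simp [blockIdempotent]
    · simp [blockIdempotent, hij, Ne.symm hij]
  apply mul_left_cancel₀ card_ne_zero
  rw [← trace_eq_card, trace_eq, charPairing_apply]
  simp only [coeff_eq, Finset.mul_sum]
  exact Finset.sum_congr rfl fun g _ => by ring

/- `∑ f(g⁻¹) g` is central in the group algebra, hence scalar in each block, the scalar being read
off from the trace. -/
theorem IsClassFunction.eq_sum_charPairing_smul [NeZero (Nat.card G : k)] [Fintype ι]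
    {f : G → k} (hf : IsClassFunction f) :
    f = ∑ i, charPairing f (blockRep E i).character • (blockRep E i).character := by
  let F : MonoidAlgebra k G := .ofCoeff (Finsupp.equivFunOnFinite.symm fun g => f g⁻¹)
  have F_coeff (g : G) : F.coeff g = f g⁻¹ := rfl
  have F_mem_center : F ∈ Set.center (MonoidAlgebra k G) :=
    mem_center_of_isClassFunction_coeff fun x g => by simp [F_coeff, ← hf x g⁻¹, mul_assoc]
  ext g
  have coeff_eq := card_mul_coeff_eq_sum_trace E F g⁻¹
  rw [F_coeff, inv_inv, ← eq_inv_mul_iff_mul_eq₀ (NeZero.ne _)] at coeff_eq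
  rw [coeff_eq, Finset.mul_sum, Finset.sum_apply]
  refine Finset.sum_congr rfl fun i _ => ?_
  obtain ⟨c, hc⟩ := exists_block_eq_smul_one_of_mem_center E F_mem_center i
  have mul_card : c * Fintype.card (n i) = ∑ a, f a⁻¹ * (blockRep E i).character a := by
    simpa [hc, F_coeff] using trace_block_eq_sum E F i
  rw [Pi.smul_apply, charPairing_apply, ← mul_card, character_blockRep]
  simp [hc, mul_assoc, mul_left_comm]

end CharPairing

section Induction

variable {k G : Type*} [Field k] [Group G] {H : Subgroup G}

theorem extend_subtypeVal_of_notMem (u : H → k) {g : G} (hg : g ∉ H) :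
    Function.extend Subtype.val u 0 g = 0 :=
  Function.extend_apply' _ _ _ (by rintro ⟨h, rfl⟩; exact hg h.2)

variable [Fintype G]

/-- The class function on `G` induced from a function `u` on `H`, extended by zero off `H`. -/
noncomputable def inducedFunction (u : H → k) (g : G) : k :=
  (Nat.card H : k)⁻¹ * ∑ x, Function.extend Subtype.val u 0 (x * g * x⁻¹)

theorem isClassFunction_inducedFunction (u : H → k) : IsClassFunction (inducedFunction u) := by
  intro y g
  rw [inducedFunction, inducedFunction]
  congr 1
  exact Fintype.sum_equiv (Equiv.mulRight y) _ _ fun x => by simp [mul_assoc]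

theorem charPairing_inducedFunction [Fintype H] [NeZero (Nat.card G : k)] (u : H → k) {f : G → k}
    (hf : IsClassFunction f) :
    charPairing (inducedFunction u) f = charPairing u fun h => f h := by
  let u₀ : G → k := Function.extend Subtype.val u 0
  have sum_conj (x : G) : ∑ g, u₀ (x * g⁻¹ * x⁻¹) * f g = ∑ g, u₀ g⁻¹ * f g :=
    Fintype.sum_equiv (MulAut.conj x).toEquiv _ _ fun g => by
      simp [← hf x g, mul_assoc]
  have sum_extend : ∑ h : H, u h⁻¹ * f h = ∑ g, u₀ g⁻¹ * f g := by
    refine Fintype.sum_of_injective _ Subtype.val_injective _ _ (fun g hg => ?_) fun h => ?_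
    · simp [u₀, extend_subtypeVal_of_notMem u (g := g⁻¹) (by simpa using hg)]
    · rw [← Subtype.val_injective.extend_apply u 0 h⁻¹, InvMemClass.coe_inv]
  calc charPairing (inducedFunction u) f
      = (Nat.card G : k)⁻¹ * ∑ x, (Nat.card H : k)⁻¹ * ∑ g, u₀ (x * g⁻¹ * x⁻¹) * f g := by
        simp only [charPairing_apply, inducedFunction, mul_assoc, Finset.sum_mul, ← Finset.mul_sum]
        rw [Finset.sum_comm]
    _ = (Nat.card H : k)⁻¹ * ∑ g, u₀ g⁻¹ * f g := by
        simp only [sum_conj, Finset.sum_const, Finset.card_univ, nsmul_eq_mul,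
          ← Nat.card_eq_fintype_card, inv_mul_cancel_left₀ (NeZero.ne (Nat.card G : k))]
    _ = charPairing u fun h => f h := by rw [charPairing_apply, sum_extend]

end Induction

section Malnormal

variable {G : Type*} [Group G]

/-- A subgroup meeting each of its conjugates by outside elements trivially. The proper nontrivial
malnormal subgroups of a finite group are its Frobenius complements. -/
def IsMalnormal (H : Subgroup G) : Prop :=
  ∀ g ∉ H, ∀ x ∈ H, g * x * g⁻¹ ∈ H → x = 1

/-- The identity together with the elements of `G` that have no conjugate in `H`. -/
def frobeniusKernelSet (H : Subgroup G) : Set G :=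
  {g | ∀ x, x * g * x⁻¹ ∈ H → g = 1}

theorem inv_mem_frobeniusKernelSet_iff {H : Subgroup G} {g : G} :
    g⁻¹ ∈ frobeniusKernelSet H ↔ g ∈ frobeniusKernelSet H :=
  forall_congr' fun x => by
    rw [← inv_mem_iff (x := x * g⁻¹ * x⁻¹), mul_inv_rev, mul_inv_rev, inv_inv, inv_inv, mul_assoc,
      inv_eq_one]

variable {k : Type*} [Field k] [Fintype G] {H : Subgroup G}

theorem inducedFunction_eq_zero_of_mem_frobeniusKernelSet {u : H → k} (hu : u 1 = 0) {g : G}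
    (hg : g ∈ frobeniusKernelSet H) : inducedFunction u g = 0 := by
  rw [inducedFunction, Finset.sum_eq_zero, mul_zero]
  intro x _
  by_cases hx : x * g * x⁻¹ ∈ H
  · have := hg x hx
    subst this
    simpa [hu] using Subtype.val_injective.extend_apply u 0 (1 : H)
  · exact extend_subtypeVal_of_notMem u hx

theorem IsMalnormal.inducedFunction_apply_coe [NeZero (Nat.card H : k)] (hH : IsMalnormal H)
    {u : H → k} (hu : IsClassFunction u) (hu₁ : u 1 = 0) (h : H) : inducedFunction u h = u h := by
  classical
  have term_eq (x : G) :
      Function.extend Subtype.val u 0 (x * h * x⁻¹) = if x ∈ H then u h else 0 := by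
    split_ifs with hx
    · rw [← hu ⟨x, hx⟩ h]
      exact Subtype.val_injective.extend_apply u 0 (⟨x, hx⟩ * h * ⟨x, hx⟩⁻¹)
    · by_cases hxh : x * h * x⁻¹ ∈ H
      · obtain rfl : h = 1 := Subtype.ext (hH x hx h h.2 hxh)
        simpa [hu₁] using Subtype.val_injective.extend_apply u 0 (1 : H)
      · exact extend_subtypeVal_of_notMem u hxh
  have card_filter : (Finset.univ.filter (· ∈ H)).card = Nat.card H := by
    rw [Nat.card_eq_fintype_card, Fintype.card_subtype]
  rw [inducedFunction, Finset.sum_congr rfl fun x _ => term_eq x, ← Finset.sum_filter,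
    Finset.sum_const, card_filter, nsmul_eq_mul, inv_mul_cancel_left₀ (NeZero.ne _)]

/-- The class function on `G` that agrees with `α` on the conjugates of a malnormal subgroup `H`
and is constant on the Frobenius kernel. -/
noncomputable def frobeniusExtension (α : H → k) : G → k :=
  α 1 • 1 + inducedFunction (α - α 1 • 1)

theorem isClassFunction_frobeniusExtension (α : H → k) :
    IsClassFunction (frobeniusExtension α) := fun x g => by
  simp [frobeniusExtension, isClassFunction_inducedFunction _ x g]

theorem frobeniusExtension_of_mem_frobeniusKernelSet (α : H → k) {g : G}
    (hg : g ∈ frobeniusKernelSet H) : frobeniusExtension α g = α 1 := by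
  simp [frobeniusExtension, inducedFunction_eq_zero_of_mem_frobeniusKernelSet _ hg]

theorem charPairing_frobeniusExtension_left [Fintype H] [NeZero (Nat.card G : k)] (α : H → k)
    {f : G → k} (hf : IsClassFunction f) :
    charPairing (frobeniusExtension α) f =
      α 1 * charPairing 1 f + charPairing α (fun h => f h) -
        α 1 * charPairing 1 (fun h : H => f h) := by
  simp only [frobeniusExtension, map_add, map_sub, map_smul, LinearMap.add_apply,
    LinearMap.sub_apply, LinearMap.smul_apply, charPairing_inducedFunction _ hf, smul_eq_mul]
  ring

theorem IsMalnormal.frobeniusExtension_apply_coe [NeZero (Nat.card H : k)] (hH : IsMalnormal H)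
    {α : H → k} (hα : IsClassFunction α) (h : H) : frobeniusExtension α h = α h := by
  have hu : IsClassFunction (α - α 1 • 1) := fun x g => by simp [hα x g]
  simp [frobeniusExtension, hH.inducedFunction_apply_coe hu (by simp)]

theorem charPairing_one_one [NeZero (Nat.card G : k)] : charPairing (1 : G → k) 1 = 1 := by
  have := NeZero.ne (Nat.card G : k)
  simp_all [charPairing_apply]

theorem IsMalnormal.charPairing_frobeniusExtension [Fintype H] [NeZero (Nat.card G : k)]
    [NeZero (Nat.card H : k)] (hH : IsMalnormal H) (α : H → k) {β : H → k}
    (hβ : IsClassFunction β) :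
    charPairing (frobeniusExtension α) (frobeniusExtension β) = charPairing α β := by
  have one_one : charPairing (1 : H → k) (fun h => (1 : G → k) h) = 1 := charPairing_one_one
  have one_right : charPairing β (fun h => (1 : G → k) h) = charPairing 1 β := charPairing_comm _ _
  have pairing_one : charPairing 1 (frobeniusExtension β) = charPairing 1 β := by
    rw [charPairing_comm, charPairing_frobeniusExtension_left β (fun _ _ => rfl),
      charPairing_one_one, one_one, one_right]
    ring
  rw [charPairing_frobeniusExtension_left α (isClassFunction_frobeniusExtension β), pairing_one]
  simp only [hH.frobeniusExtension_apply_coe hβ]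
  ring

end Malnormal

section FrobeniusKernel

theorem exists_sq_eq_one_of_sum_sq_eq_one {ι : Type*} [Fintype ι] {m : ι → ℤ}
    (hm : ∑ i, m i ^ 2 = 1) : ∃ i, m i ^ 2 = 1 ∧ ∀ j ≠ i, m j = 0 := by
  classical
  obtain ⟨i, hi⟩ : ∃ i, m i ≠ 0 := by
    by_contra! m_eq_zero
    simp [m_eq_zero] at hm
  have split_sum := Finset.add_sum_erase Finset.univ (fun j => m j ^ 2) (Finset.mem_univ i)
  have rest_nonneg : 0 ≤ ∑ j ∈ Finset.univ.erase i, m j ^ 2 :=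
    Finset.sum_nonneg fun j _ => sq_nonneg (m j)
  have sq_pos : 0 < m i ^ 2 := by positivity
  have rest_eq_zero : ∑ j ∈ Finset.univ.erase i, m j ^ 2 = 0 := by lia
  rw [Finset.sum_eq_zero_iff_of_nonneg fun j _ => sq_nonneg (m j)] at rest_eq_zero
  exact ⟨i, by lia, fun j hj => by simpa [hj] using rest_eq_zero j⟩

/- Comparing coefficients in `e * e = e` at `g ∈ S` counts the `x ∈ S` with `x⁻¹ * g ∈ S`: there are
`c⁻¹` of them, whatever `g` is, and `g = 1` shows that this is all of `S`. -/
theorem exists_subgroup_of_isIdempotentElem {k G : Type*} [Field k] [CharZero k] [Group G]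
    [Finite G] {e : MonoidAlgebra k G} (he : IsIdempotentElem e) {S : Set G} {c : k} (hc : c ≠ 0)
    (e_coeff : ⇑e.coeff = S.indicator fun _ => c) (one_mem : 1 ∈ S)
    (inv_mem : ∀ g ∈ S, g⁻¹ ∈ S) :
    ∃ K : Subgroup G, (K : Set G) = S ∧ c * Nat.card K = 1 := by
  classical
  have := Fintype.ofFinite G
  have count {g : G} (hg : g ∈ S) : c * Finset.card {x ∈ S.toFinset | x⁻¹ * g ∈ S} = 1 := by
    have coeff_sq : (e * e).coeff g = c * (c * Finset.card {x ∈ S.toFinset | x⁻¹ * g ∈ S}) := by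
      rw [MonoidAlgebra.coeff_mul_apply_left, Finsupp.sum_fintype _ _ (by simp)]
      have term_eq (x : G) : e.coeff x * e.coeff (x⁻¹ * g) =
          if x ∈ S.toFinset.filter fun x => x⁻¹ * g ∈ S then c * c else 0 := by
        by_cases hx : x ∈ S <;> simp [e_coeff, Set.indicator_apply, hx]
      rw [Finset.sum_congr rfl fun x _ => term_eq x, Finset.sum_ite_mem, Finset.univ_inter,
        Finset.sum_const, nsmul_eq_mul]
      ring
    rw [he, e_coeff, Set.indicator_of_mem hg] at coeff_sq
    exact (mul_left_cancel₀ hc (by rw [← coeff_sq, mul_one])).symm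
  have filter_one : {x ∈ S.toFinset | x⁻¹ * 1 ∈ S} = S.toFinset := by
    simpa [Finset.filter_eq_self] using inv_mem
  have card_eq : c * S.toFinset.card = 1 := by rw [← count one_mem, filter_one]
  have inv_mul_mem {x g : G} (hx : x ∈ S) (hg : g ∈ S) : x⁻¹ * g ∈ S := by
    have card_filter : Finset.card {x ∈ S.toFinset | x⁻¹ * g ∈ S} = S.toFinset.card := by
      exact_mod_cast mul_left_cancel₀ hc ((count hg).trans card_eq.symm)
    exact Finset.card_filter_eq_iff.1 card_filter x (by simpa using hx)
  let K : Subgroup G :=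
    { carrier := S
      one_mem' := one_mem
      inv_mem' := fun {g} hg => inv_mem g hg
      mul_mem' := fun {x y} hx hy => by simpa using inv_mul_mem (inv_mem x hx) hy }
  refine ⟨K, rfl, ?_⟩
  rwa [← Set.ncard_eq_toFinset_card', ← Nat.card_coe_set_eq] at card_eq

theorem character_trivial {k G : Type*} [Field k] [Group G] :
    (Representation.trivial k G k).character = 1 := by
  ext
  simp [Representation.character]

variable {k G ι : Type*} [Field k] [Group G] [Fintype G] {H : Subgroup G}
  {n : ι → Type*} [∀ i, Fintype (n i)] [∀ i, DecidableEq (n i)]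

theorem exists_int_charPairing_frobeniusExtension [NeZero (Nat.card G : k)]
    [NeZero (Nat.card H : k)] {V W : Type*} [AddCommGroup V] [Module k V]
    [FiniteDimensional k V] [AddCommGroup W] [Module k W] [FiniteDimensional k W]
    (ρ : Representation k H V) (σ : Representation k G W) :
    ∃ m : ℤ, charPairing (frobeniusExtension ρ.character) σ.character = m := by
  have := Fintype.ofFinite H
  let resσ : Representation k H W := σ.comp H.subtype
  have pairing_G : charPairing 1 σ.character = Module.finrank k
      ((Representation.trivial k G k).IntertwiningMap σ) := by
    rw [← character_trivial, charPairing_character_eq_finrank]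
  have pairing_H : charPairing 1 resσ.character = Module.finrank k
      ((Representation.trivial k H k).IntertwiningMap resσ) := by
    rw [← character_trivial, charPairing_character_eq_finrank]
  have res_character : (fun h : H => σ.character h) = resσ.character := rfl
  rw [charPairing_frobeniusExtension_left _ (isClassFunction_character σ), res_character, pairing_G,
    pairing_H, charPairing_character_eq_finrank, Representation.char_one]
  exact ⟨Module.finrank k V * Module.finrank k ((Representation.trivial k G k).IntertwiningMap σ) +
    Module.finrank k (ρ.IntertwiningMap resσ) -
    Module.finrank k V * Module.finrank k ((Representation.trivial k H k).IntertwiningMap resσ),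
    by push_cast; rfl⟩

theorem IsMalnormal.sum_card_mul_frobeniusExtension [NeZero (Nat.card H : k)] [Fintype ι]
    (hH : IsMalnormal H) (E : MonoidAlgebra k H ≃ₐ[k] ∀ i, Matrix (n i) (n i) k) (g : G) :
    ∑ i, (Fintype.card (n i) : k) * frobeniusExtension (blockRep E i).character g =
      (frobeniusKernelSet H).indicator (fun _ => (Nat.card H : k)) g := by
  classical
  by_cases hg : g ∈ frobeniusKernelSet H
  · rw [Set.indicator_of_mem hg, ← if_pos (rfl : (1 : H) = 1) (t := (Nat.card H : k)) (e := 0),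
      ← sum_card_mul_character_blockRep E]
    simp only [frobeniusExtension_of_mem_frobeniusKernelSet _ hg]
  · obtain ⟨x, hx, hg₁⟩ : ∃ x, x * g * x⁻¹ ∈ H ∧ g ≠ 1 := by
      simpa [frobeniusKernelSet] using hg
    have conj_ne_one : (⟨x * g * x⁻¹, hx⟩ : H) ≠ 1 := by
      simpa [Subtype.ext_iff] using hg₁
    have value_eq (i : ι) : frobeniusExtension (blockRep E i).character g =
        (blockRep E i).character ⟨x * g * x⁻¹, hx⟩ := by
      rw [← hH.frobeniusExtension_apply_coe (isClassFunction_character _),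
        isClassFunction_frobeniusExtension _ x g]
    simp only [value_eq, sum_card_mul_character_blockRep, conj_ne_one, if_false,
      Set.indicator_of_notMem hg]

theorem IsMalnormal.exists_frobeniusExtension_eq_character [CharZero k] [Fintype H] [Finite ι]
    (hH : IsMalnormal H) (E : MonoidAlgebra k G ≃ₐ[k] ∀ i, Matrix (n i) (n i) k) {V : Type*}
    [AddCommGroup V] [Module k V] [FiniteDimensional k V] [Nontrivial V] (ρ : Representation k H V)
    (hρ : charPairing ρ.character ρ.character = 1) :
    ∃ i, frobeniusExtension ρ.character = (blockRep E i).character := by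
  have := Fintype.ofFinite ι
  choose m hm using fun i => exists_int_charPairing_frobeniusExtension ρ (blockRep E i)
  have expansion : frobeniusExtension ρ.character = ∑ i, (m i : k) • (blockRep E i).character := by
    simpa [hm] using (isClassFunction_frobeniusExtension ρ.character).eq_sum_charPairing_smul E
  have sum_sq : ∑ i, m i ^ 2 = 1 := by
    have norm_eq_one := hH.charPairing_frobeniusExtension ρ.character (isClassFunction_character ρ)
    rw [hρ] at norm_eq_one
    nth_rw 2 [expansion] at norm_eq_one
    simp only [map_sum, map_smul, hm, smul_eq_mul, ← sq] at norm_eq_one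
    exact_mod_cast norm_eq_one
  obtain ⟨i, sq_eq_one, eq_zero⟩ := exists_sq_eq_one_of_sum_sq_eq_one sum_sq
  have eq_smul : frobeniusExtension ρ.character = (m i : k) • (blockRep E i).character := by
    rw [expansion]
    exact Finset.sum_eq_single i (fun j _ hj => by simp [eq_zero j hj]) (by simp)
  have degree_eq : (Module.finrank k V : ℤ) = m i * Fintype.card (n i) := by
    have := congrFun eq_smul 1
    rw [frobeniusExtension_of_mem_frobeniusKernelSet _ fun _ _ => rfl, Pi.smul_apply,
      Representation.char_one, Representation.char_one, smul_eq_mul,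
      Module.finrank_fintype_fun_eq_card] at this
    exact_mod_cast this
  have eq_one : m i = 1 := by
    have : 0 < Module.finrank k V := Module.finrank_pos
    rcases sq_eq_one_iff.1 sq_eq_one with h | h
    · exact h
    · rw [h] at degree_eq
      lia
  exact ⟨i, by simpa [eq_one] using eq_smul⟩

end FrobeniusKernel

theorem IsMalnormal.exists_idempotent_coeff_eq_indicator {k G ι κ : Type*} [Field k] [CharZero k]
    [Group G] [Finite G] {H : Subgroup G} [Finite ι] [Finite κ] {n : ι → Type*} {m : κ → Type*}
    [∀ i, Fintype (n i)] [∀ i, DecidableEq (n i)] [∀ j, Fintype (m j)] [∀ j, DecidableEq (m j)]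
    [∀ j, Nonempty (m j)] (hH : IsMalnormal H)
    (E : MonoidAlgebra k G ≃ₐ[k] ∀ i, Matrix (n i) (n i) k)
    (F : MonoidAlgebra k H ≃ₐ[k] ∀ j, Matrix (m j) (m j) k) :
    ∃ e : MonoidAlgebra k G, IsIdempotentElem e ∧
      ⇑e.coeff = (frobeniusKernelSet H).indicator fun _ => (Nat.card H / Nat.card G : k) := by
  classical
  have := Fintype.ofFinite G
  have := Fintype.ofFinite H
  have := Fintype.ofFinite ι
  have := Fintype.ofFinite κ
  choose σ hσ using fun j => hH.exists_frobeniusExtension_eq_character E (blockRep F j)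
    (by rw [charPairing_blockRep, if_pos rfl])
  have restrict_eq (j : κ) : (fun h : H => (blockRep E (σ j)).character h) =
      (blockRep F j).character := by
    ext h
    rw [← hσ, hH.frobeniusExtension_apply_coe (isClassFunction_character _)]
  have card_eq (j : κ) : (Fintype.card (n (σ j)) : k) = Fintype.card (m j) := by
    simpa using congrFun (restrict_eq j) 1
  have σ_injective : Function.Injective σ := fun i j hij => by
    have pairing_eq := charPairing_blockRep F i j
    rw [← restrict_eq j, ← hij, restrict_eq i, charPairing_blockRep, if_pos rfl] at pairing_eq
    simpa using pairing_eq
  refine ⟨blockIdempotent E (Finset.univ.map ⟨σ, σ_injective⟩),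
    isIdempotentElem_blockIdempotent E _, ?_⟩
  ext g
  have coeff_eq := card_mul_coeff_blockIdempotent E (Finset.univ.map ⟨σ, σ_injective⟩) g
  simp only [Finset.sum_map, Function.Embedding.coeFn_mk, card_eq, ← hσ,
    hH.sum_card_mul_frobeniusExtension F, Set.indicator_apply,
    inv_mem_frobeniusKernelSet_iff] at coeff_eq
  rw [Set.indicator_apply, ← mul_right_inj' (NeZero.ne (Nat.card G : k)), coeff_eq, mul_ite,
    mul_div_cancel₀ _ (NeZero.ne (Nat.card G : k)), mul_zero]

/- **Frobenius' theorem**: `e` is the central idempotent onto those irreducible representations of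
`G` that extend one of `H`, and the kernel is the support of its coefficients. -/
theorem IsMalnormal.exists_normal_subgroup_eq_frobeniusKernelSet {G : Type*} [Group G] [Finite G]
    {H : Subgroup G} (hH : IsMalnormal H) :
    ∃ K : Subgroup G, K.Normal ∧ (K : Set G) = frobeniusKernelSet H ∧
      Nat.card K * Nat.card H = Nat.card G := by
  obtain ⟨a, n, _, ⟨E⟩⟩ := exists_groupAlgebra_algEquiv_pi_matrix ℂ G
  obtain ⟨b, m, _, ⟨F⟩⟩ := exists_groupAlgebra_algEquiv_pi_matrix ℂ H
  obtain ⟨e, he, e_coeff⟩ := hH.exists_idempotent_coeff_eq_indicator E F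
  obtain ⟨K, hK, card_K⟩ := exists_subgroup_of_isIdempotentElem he
    (div_ne_zero (NeZero.ne _) (NeZero.ne _)) e_coeff (fun _ _ => rfl)
    fun g => inv_mem_frobeniusKernelSet_iff.2
  refine ⟨K, ⟨fun g hg x => ?_⟩, hK, ?_⟩
  · rw [← SetLike.mem_coe, hK] at hg ⊢
    intro y hy
    rw [hg (y * x) (by simpa [mul_assoc] using hy)]
    simp
  · have := NeZero.ne (Nat.card G : ℂ)
    field_simp at card_K
    rw [mul_comm]
    exact_mod_cast card_K

section CyclicPGroup

open scoped commutatorElement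

theorem mul_pow_of_mul_eq_mul_mul {M : Type*} [Monoid M] {a b z : M} (hza : Commute z a)
    (hzb : Commute z b) (h : b * a = z * (a * b)) (n : ℕ) :
    (a * b) ^ n = z ^ n.choose 2 * (a ^ n * b ^ n) := by
  have pow_mul_eq (n : ℕ) : b ^ n * a = z ^ n * (a * b ^ n) := by
    have semiconj : SemiconjBy a (z * b) b := by
      rw [SemiconjBy, h, ← mul_assoc, ← hza.eq, mul_assoc]
    rw [← (semiconj.pow_right n).eq, hzb.mul_pow, ← mul_assoc, ← (hza.pow_left n).eq, mul_assoc]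
  induction n with
  | zero => simp
  | succ n ih =>
    calc (a * b) ^ (n + 1) = z ^ n.choose 2 * (a ^ n * (b ^ n * a) * b) := by
          simp only [pow_succ (a * b), ih, mul_assoc]
      _ = z ^ n.choose 2 * (a ^ n * z ^ n * (a * b ^ n) * b) := by simp only [pow_mul_eq, mul_assoc]
      _ = z ^ (n.choose 2 + n) * (a ^ n * a * (b ^ n * b)) := by
          simp only [← (hza.pow_pow n n).eq, pow_add, mul_assoc]
      _ = z ^ (n + 1).choose 2 * (a ^ (n + 1) * b ^ (n + 1)) := by
          rw [← pow_succ, ← pow_succ, Nat.choose_succ_succ' n 1, Nat.choose_one_right, add_comm]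

theorem mul_pow_prime_of_mem_center {P : Type*} [Group P] {p : ℕ} (hp : p.Prime) (hp2 : p ≠ 2)
    {a b : P} (hab : ⁅b, a⁆ ∈ Subgroup.center P) (ha : a ^ p ∈ Subgroup.center P) :
    (a * b) ^ p = a ^ p * b ^ p := by
  have hz (x : P) : Commute ⁅b, a⁆ x := (Subgroup.mem_center_iff.1 hab x).symm
  have conj_eq : b * a * b⁻¹ = ⁅b, a⁆ * a := by simp [commutatorElement_def]
  have commutator_pow : ⁅b, a⁆ ^ p = 1 := by
    apply mul_right_cancel (b := a ^ p)
    rw [← (hz a).mul_pow, ← conj_eq, conj_pow, Subgroup.mem_center_iff.1 ha b, one_mul,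
      mul_inv_cancel_right]
  obtain ⟨m, hm⟩ := hp.dvd_choose_self two_ne_zero (lt_of_le_of_ne hp.two_le hp2.symm)
  rw [mul_pow_of_mul_eq_mul_mul (hz a) (hz b) (by simp [commutatorElement_def, mul_assoc]) p, hm,
    pow_mul, commutator_pow, one_pow, one_mul]

theorem inf_le_center_of_sup_eq_top {P : Type*} [Group P] {M N : Subgroup P} [IsMulCommutative M]
    [IsMulCommutative N] (h : M ⊔ N = ⊤) : M ⊓ N ≤ Subgroup.center P := by
  rw [← SetLike.coe_subset_coe, ← Subgroup.centralizer_eq_top_iff_subset, ← top_le_iff, ← h]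
  exact sup_le (M.le_centralizer.trans (Subgroup.centralizer_le inf_le_left))
    (N.le_centralizer.trans (Subgroup.centralizer_le inf_le_right))

variable {P : Type*} [Group P] {p : ℕ} [Fact p.Prime]

theorem commutator_le_of_index_eq_prime (M : Subgroup P) [M.Normal] (hM : M.index = p) :
    commutator P ≤ M := by
  have := isCyclic_of_prime_card (α := P ⧸ M) hM
  exact Subgroup.Normal.quotient_commutative_iff_commutator_le.1 inferInstance

variable [Finite P]

theorem exists_le_index_eq_prime (hP : IsPGroup p P) {K : Subgroup P} (hK : K ≠ ⊤) :
    ∃ M : Subgroup P, K ≤ M ∧ M.index = p := by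
  obtain ⟨n, hn⟩ := hP.exists_card_eq
  obtain ⟨m, hm⟩ := (hP.to_subgroup K).exists_card_eq
  have card_lt : p ^ m < p ^ n := by
    rw [← hn, ← hm]
    exact K.card_le_card_group.lt_of_ne (mt (Subgroup.card_eq_iff_eq_top K).1 hK)
  have lt : m < n := (Nat.pow_lt_pow_iff_right (Fact.out : p.Prime).one_lt).1 card_lt
  obtain ⟨M, card_M, hKM⟩ := Sylow.exists_subgroup_card_pow_prime_le p
    (hn ▸ pow_dvd_pow p (Nat.sub_le n 1)) K hm (by lia)
  refine ⟨M, hKM, ?_⟩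
  have card_mul_index := M.card_mul_index
  rw [card_M, hn, ← Nat.sub_add_cancel (by lia : 1 ≤ n), pow_succ,
    Nat.add_sub_cancel] at card_mul_index
  exact Nat.eq_of_mul_eq_mul_left (pow_pos (Fact.out : p.Prime).pos _) card_mul_index

theorem normal_of_index_eq_prime (hP : IsPGroup p P) {M : Subgroup P} (hM : M.index = p) :
    M.Normal := by
  obtain ⟨n, hn⟩ := hP.exists_card_eq
  apply Subgroup.normal_of_index_eq_minFac_card
  have n_ne_zero : n ≠ 0 := by
    rintro rfl
    have := hM ▸ M.index_dvd_card
    exact (Fact.out : p.Prime).one_lt.ne' (Nat.dvd_one.1 (by simpa [hn] using this))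
  rw [hM, hn, Nat.Prime.pow_minFac Fact.out n_ne_zero]

theorem sup_eq_top_of_index_eq_prime {M N : Subgroup P} (hM : M.index = p) (hN : ¬ N ≤ M) :
    M ⊔ N = ⊤ := by
  have lt : M < M ⊔ N := by simpa using hN
  rw [← Subgroup.index_eq_one]
  have index_dvd : (M ⊔ N).index ∣ p := hM ▸ Subgroup.index_dvd_of_le lt.le
  refine ((Nat.dvd_prime Fact.out).1 index_dvd).resolve_right fun h => ?_
  exact (Subgroup.index_strictAnti lt).ne (h.trans hM.symm)

/- A noncyclic group all of whose maximal subgroups are cyclic has class at most two, with `p`-th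
powers central, so for odd `p` raising to the `p`-th power is an endomorphism. Its image lies in the
intersection of two maximal subgroups and is too small for its kernel to have order `p`. -/
theorem isCyclic_of_index_eq_prime (hp2 : p ≠ 2) (hP : IsPGroup p P)
    (hcyc : ∀ M : Subgroup P, M.index = p → IsCyclic M)
    (hroots : Nat.card {x : P // x ^ p = 1} ≤ p) : IsCyclic P := by
  by_contra not_cyclic
  have exists_maximal (x : P) : ∃ M : Subgroup P, x ∈ M ∧ M.index = p := by
    simpa using exists_le_index_eq_prime hP (K := Subgroup.zpowers x)
      fun h => not_cyclic ⟨x, (Subgroup.eq_top_iff' _).1 h⟩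
  obtain ⟨M, -, hM⟩ := exists_maximal 1
  obtain ⟨x, hx⟩ : ∃ x, x ∉ M := by
    by_contra! h
    rw [(Subgroup.eq_top_iff' M).2 h, Subgroup.index_top] at hM
    exact (Fact.out : p.Prime).one_lt.ne hM
  obtain ⟨N, hxN, hN⟩ := exists_maximal x
  have not_le : ¬ N ≤ M := fun h => hx (h hxN)
  have := normal_of_index_eq_prime hP hM
  have := normal_of_index_eq_prime hP hN
  have := hcyc M hM
  have := hcyc N hN
  have inf_le_center : M ⊓ N ≤ Subgroup.center P :=
    inf_le_center_of_sup_eq_top (sup_eq_top_of_index_eq_prime hM not_le)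
  have pow_mem (a : P) : a ^ p ∈ M ⊓ N := ⟨hM ▸ M.pow_index_mem a, hN ▸ N.pow_index_mem a⟩
  have commutator_mem (a b : P) : ⁅a, b⁆ ∈ M ⊓ N :=
    le_inf (commutator_le_of_index_eq_prime M hM) (commutator_le_of_index_eq_prime N hN)
      (Subgroup.commutator_mem_commutator (Subgroup.mem_top a) (Subgroup.mem_top b))
  let f : P →* P := MonoidHom.mk' (· ^ p) fun a b => mul_pow_prime_of_mem_center Fact.out hp2
    (inf_le_center (commutator_mem b a)) (inf_le_center (pow_mem a))
  have card_ker : Nat.card f.ker ≤ p := hroots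
  have card_range : Nat.card f.range ≤ Nat.card (M ⊓ N : Subgroup P) :=
    Subgroup.card_le_of_le (by rintro _ ⟨a, rfl⟩; exact pow_mem a)
  have index_gt : p < (M ⊓ N).index := by
    rw [← hN]
    exact Subgroup.index_strictAnti (inf_lt_right.2 not_le)
  have ker_mul_range : Nat.card f.ker * Nat.card f.range = Nat.card P := by
    rw [← Subgroup.index_ker, Subgroup.card_mul_index]
  have := (M ⊓ N).card_mul_index
  have : 0 < Nat.card (M ⊓ N : Subgroup P) := Nat.card_pos
  nlinarith

theorem isCyclic_of_card_pow_prime_eq_one_le (hp2 : p ≠ 2) (hP : IsPGroup p P)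
    (hroots : Nat.card {x : P // x ^ p = 1} ≤ p) : IsCyclic P := by
  induction h : Nat.card P using Nat.strong_induction_on generalizing P with
  | _ n ih =>
    refine isCyclic_of_index_eq_prime hp2 hP (fun M hM => ?_) hroots
    refine ih (Nat.card M) ?_ (hP.to_subgroup M) ?_ rfl
    · rw [← h, ← M.card_mul_index, hM]
      exact lt_mul_of_one_lt_right Nat.card_pos (Fact.out : p.Prime).one_lt
    · let f (x : {x : M // x ^ p = 1}) : {x : P // x ^ p = 1} :=
        ⟨x, congrArg Subtype.val x.2⟩
      refine (Nat.card_le_card_of_injective f fun x y hxy => ?_).trans hroots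
      exact Subtype.ext (Subtype.ext (Subtype.mk.inj hxy))

end CyclicPGroup

section FixedPointFree

/-- An action of `H` on `A` by automorphisms in which only the identity of `H` fixes a nontrivial
element of `A`. -/
def IsFixedPointFreeAction {H A : Type*} [Group H] [Group A] (φ : H →* MulAut A) : Prop :=
  ∀ h, h ≠ 1 → MonoidHom.FixedPointFree (φ h)

namespace IsFixedPointFreeAction

theorem comp_injective {H H' A : Type*} [Group H] [Group H'] [Group A] {φ : H →* MulAut A}
    (hφ : IsFixedPointFreeAction φ) {f : H' →* H} (hf : Function.Injective f) :
    IsFixedPointFreeAction (φ.comp f) :=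
  fun h hh => hφ (f h) ((map_ne_one_iff f hf).2 hh)

theorem coprime_card {H A : Type*} [Group H] [Finite H] [Group A] [Finite A] {φ : H →* MulAut A}
    (hφ : IsFixedPointFreeAction φ) : (Nat.card H).Coprime (Nat.card A) := by
  refine Nat.coprime_of_dvd fun p hp hpH hpA => ?_
  have := Fact.mk hp
  obtain ⟨x, hx⟩ := exists_prime_orderOf_dvd_card' p hpH
  let _ : MulAction (Subgroup.zpowers x) A :=
    MulAction.compHom A (φ.comp (Subgroup.zpowers x).subtype)
  have isPGroup : IsPGroup p (Subgroup.zpowers x) :=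
    IsPGroup.of_card (n := 1) (by rw [Nat.card_zpowers, hx, pow_one])
  obtain ⟨a, ha, ha_ne⟩ := isPGroup.exists_fixed_point_of_prime_dvd_card_of_fixed_point A hpA
    (a := 1) fun y => map_one (φ y)
  refine ha_ne (hφ x (fun h => ?_) a (ha ⟨x, Subgroup.mem_zpowers x⟩)).symm
  rw [h, orderOf_one] at hx
  exact hp.one_lt.ne hx

variable {H A : Type*} [Group H]

theorem existsUnique_orderOf_eq_two [Finite H] [Group A] [Finite A] [Nontrivial A]
    {φ : H →* MulAut A} (hφ : IsFixedPointFreeAction φ) (h2 : 2 ∣ Nat.card H) :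
    ∃! z : H, orderOf z = 2 := by
  have apply_eq_inv {z : H} (hz : orderOf z = 2) (a : A) : φ z a = a⁻¹ := by
    have hz_ne : z ≠ 1 := by
      rintro rfl
      simp at hz
    have involutive : Function.Involutive (φ z) := fun a => by
      rw [← MulAut.mul_apply, ← map_mul, ← sq, ← hz, pow_orderOf_eq_one, map_one, MulAut.one_apply]
    exact congrFun ((hφ z hz_ne).coe_eq_inv_of_involutive involutive) a
  obtain ⟨z, hz⟩ := exists_prime_orderOf_dvd_card' 2 h2
  refine ⟨z, hz, fun w hw => ?_⟩
  by_contra hne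
  obtain ⟨a, ha⟩ := exists_ne (1 : A)
  refine ha (hφ (w⁻¹ * z) (by rwa [Ne, inv_mul_eq_one]) a ?_)
  rw [map_mul, MulAut.mul_apply, apply_eq_inv hz, ← apply_eq_inv hw, ← MulAut.mul_apply, ← map_mul,
    inv_mul_cancel, map_one, MulAut.one_apply]

variable [CommGroup A] {φ : H →* MulAut A}

theorem prod_range_pow_apply_eq_one (hφ : IsFixedPointFreeAction φ) {h : H} (hh : h ≠ 1) {n : ℕ}
    (hn : h ^ n = 1) (a : A) : ∏ j ∈ Finset.range n, φ (h ^ j) a = 1 := by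
  refine hφ h hh _ ?_
  calc φ h (∏ j ∈ Finset.range n, φ (h ^ j) a) = ∏ j ∈ Finset.range n, φ (h ^ (j + 1)) a := by
        simp only [map_prod, ← MulAut.mul_apply, ← map_mul, ← pow_succ']
    _ = ∏ j ∈ Finset.range n, φ (h ^ j) a := by
        apply mul_right_cancel (b := φ (h ^ 0) a)
        rw [← Finset.prod_range_succ' fun j => φ (h ^ j) a, Finset.prod_range_succ, hn, pow_zero]

theorem prod_subgroup_apply_eq_one (hφ : IsFixedPointFreeAction φ) {C : Subgroup H} [Fintype C]
    (hC : C ≠ ⊥) (a : A) : ∏ c : C, φ c a = 1 := by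
  obtain ⟨c₀, hc₀⟩ := C.ne_bot_iff_exists_ne_one.1 hC
  refine hφ c₀ (by simpa using hc₀) _ ?_
  rw [map_prod]
  exact Fintype.prod_equiv (Equiv.mulLeft c₀) _ _ fun c => by simp

end IsFixedPointFreeAction

theorem eq_of_pow_eq_pow_of_coprime {M : Type*} [Monoid M] {x y : M} {j n : ℕ} (hx : x ^ n = 1)
    (hy : y ^ n = 1) (hj : j.Coprime n) (h : x ^ j = y ^ j) : x = y := by
  rcases eq_or_ne n 1 with rfl | hn
  · rw [← pow_one x, hx, ← pow_one y, hy]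
  rcases eq_or_ne n 0 with rfl | hn₀
  · rw [← pow_one x, ← pow_one y, ← (Nat.coprime_zero_right j).1 hj, h]
  obtain ⟨m, -, hm⟩ := Nat.exists_mul_mod_eq_one_of_coprime hj (by lia)
  rw [← pow_one x, ← pow_one y, ← hm, ← pow_eq_pow_mod _ hx, ← pow_eq_pow_mod _ hy, pow_mul, h,
    pow_mul]

theorem mul_pow_mul_inv_pow_mem {H : Type*} [Group H] {C : Subgroup H} {b c : H}
    (hb : ∀ c ∈ C, b * c * b⁻¹ ∈ C) (hc : c ∈ C) (j : ℕ) : (c * b) ^ j * (b ^ j)⁻¹ ∈ C := by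
  induction j with
  | zero => simp
  | succ j ih =>
    have step : (c * b) ^ (j + 1) * (b ^ (j + 1))⁻¹ =
        c * (b * ((c * b) ^ j * (b ^ j)⁻¹) * b⁻¹) := by
      simp [pow_succ', mul_assoc]
    rw [step]
    exact C.mul_mem hc (hb _ ih)

namespace IsFixedPointFreeAction

variable {H A : Type*} [Group H] [Finite H] [CommGroup A] [Finite A] [Nontrivial A]
  {φ : H →* MulAut A}

/- If every element of the coset `C * b` had `p`-th power `1`, each sum over the cyclic group it
generates would annihilate `A` (written additively). In the total of these sums over `C * b` the
nonzero powers contribute sums over cosets of `C`, which annihilate `A` too; what is left is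
multiplication by `|C|`. -/
theorem exists_mul_pow_ne_one (hφ : IsFixedPointFreeAction φ) {C : Subgroup H} (hC : C ≠ ⊥) {b : H}
    (hb : b ∉ C) (hbC : ∀ c ∈ C, b * c * b⁻¹ ∈ C) {p : ℕ} (hp : p.Prime) :
    ∃ c ∈ C, (c * b) ^ p ≠ 1 := by
  by_contra! pow_eq_one
  have := Fintype.ofFinite C
  have prod_power_eq_one (a : A) {j : ℕ} (hj : 0 < j) (hjp : j < p) :
      ∏ c : C, φ ((c * b) ^ j) a = 1 := by
    let f (c : C) : C := ⟨(c * b) ^ j * (b ^ j)⁻¹, mul_pow_mul_inv_pow_mem hbC c.2 j⟩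
    have f_injective : Function.Injective f := fun c d hcd => by
      have pow_eq : (c * b : H) ^ j = (d * b) ^ j := mul_right_cancel (congrArg Subtype.val hcd)
      exact Subtype.ext <| mul_right_cancel <| eq_of_pow_eq_pow_of_coprime
        (pow_eq_one c c.2) (pow_eq_one d d.2) (Nat.coprime_of_lt_prime hj.ne' hjp hp).symm pow_eq
    rw [← hφ.prod_subgroup_apply_eq_one hC (φ (b ^ j) a)]
    refine Fintype.prod_bijective f (Finite.injective_iff_bijective.1 f_injective) _ _ fun c => ?_
    rw [← MulAut.mul_apply, ← map_mul, inv_mul_cancel_right]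
  have pow_card_C_eq_one (a : A) : a ^ Nat.card C = 1 := by
    calc a ^ Nat.card C = ∏ j ∈ Finset.range p, ∏ c : C, φ ((c * b) ^ j) a := by
          rw [Finset.prod_eq_single_of_mem 0 (Finset.mem_range.2 hp.pos) fun j hj hj₀ =>
            prod_power_eq_one a (Nat.pos_of_ne_zero hj₀) (Finset.mem_range.1 hj)]
          simp
      _ = ∏ c : C, ∏ j ∈ Finset.range p, φ ((c * b) ^ j) a := Finset.prod_comm
      _ = 1 := Finset.prod_eq_one fun c _ =>
          hφ.prod_range_pow_apply_eq_one
            (fun h => hb (by simp [eq_inv_of_mul_eq_one_right h]))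
            (pow_eq_one c c.2) a
  obtain ⟨a, ha⟩ := exists_ne (1 : A)
  have coprime : (Nat.card C).Coprime (Nat.card A) :=
    hφ.coprime_card.coprime_dvd_left C.card_subgroup_dvd_card
  exact ha (eq_of_pow_eq_pow_of_coprime pow_card_eq_one' (one_pow _) coprime
    (by rw [pow_card_C_eq_one, one_pow]))

end IsFixedPointFreeAction

theorem mem_center_of_unique_orderOf {G : Type*} [Group G] {z : G}
    (hz : ∀ w, orderOf w = orderOf z → w = z) : z ∈ Subgroup.center G := by
  rw [Subgroup.mem_center_iff]
  intro g
  rw [← mul_inv_eq_iff_eq_mul]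
  exact hz _ ((MulAut.conj g).orderOf_eq z)

namespace IsFixedPointFreeAction

open scoped commutatorElement

variable {H A : Type*} [Group H] [Finite H] [CommGroup A] [Finite A] [Nontrivial A]
  {φ : H →* MulAut A} {p : ℕ}

/- The commutators `⁅c, b⁆` with `c ∈ C` form a subgroup `D`, and `D * b` consists of conjugates of
`b`; so `D` is trivial by `exists_mul_pow_ne_one`. -/
theorem commute_of_pow_prime_eq_one (hφ : IsFixedPointFreeAction φ) (hp : p.Prime) {b : H}
    (hb : b ^ p = 1) {C : Subgroup H} [IsMulCommutative C] (hbC : ∀ c ∈ C, b * c * b⁻¹ ∈ C)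
    {c : H} (hc : c ∈ C) : Commute c b := by
  by_cases hbC' : b ∈ C
  · exact setLike_mul_comm hc hbC'
  have commutator_mem {d : H} (hd : d ∈ C) : ⁅d, b⁆ ∈ C := by
    rw [commutatorElement_def, mul_assoc d, mul_assoc d]
    exact C.mul_mem hd (hbC _ (C.inv_mem hd))
  have map_mul (d e : C) : ⁅(d * e : H), b⁆ = ⁅(d : H), b⁆ * ⁅(e : H), b⁆ := by
    calc ⁅(d * e : H), b⁆ = d * ⁅(e : H), b⁆ * (b * (d : H)⁻¹ * b⁻¹) := by
          simp [commutatorElement_def, mul_assoc]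
      _ = ⁅(e : H), b⁆ * ⁅(d : H), b⁆ := by
          rw [setLike_mul_comm d.2 (commutator_mem e.2)]
          simp only [commutatorElement_def, mul_assoc]
      _ = ⁅(d : H), b⁆ * ⁅(e : H), b⁆ :=
          setLike_mul_comm (commutator_mem e.2) (commutator_mem d.2)
  let D : Subgroup H := (MonoidHom.mk' (fun d : C => ⁅(d : H), b⁆) map_mul).range
  have D_le : D ≤ C := by
    rintro _ ⟨d, rfl⟩
    exact commutator_mem d.2
  have conj_mem : ∀ d ∈ D, b * d * b⁻¹ ∈ D := by
    rintro _ ⟨d, rfl⟩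
    exact ⟨⟨b * d * b⁻¹, hbC d d.2⟩, by simp [commutatorElement_def, mul_assoc]⟩
  have pow_eq_one : ∀ d ∈ D, (d * b) ^ p = 1 := by
    rintro _ ⟨d, rfl⟩
    simp [commutatorElement_def, conj_pow, hb]
  have D_eq_bot : D = ⊥ := by
    by_contra hD
    obtain ⟨d, hd, hne⟩ := hφ.exists_mul_pow_ne_one hD (fun h => hbC' (D_le h)) conj_mem hp
    exact hne (pow_eq_one d hd)
  rw [← commutatorElement_eq_one_iff_commute, ← Subgroup.mem_bot, ← D_eq_bot]
  exact ⟨⟨c, hc⟩, rfl⟩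

variable [Fact p.Prime]

theorem card_pow_prime_eq_one_le (hφ : IsFixedPointFreeAction φ) (hH : IsPGroup p H) :
    Nat.card {h : H // h ^ p = 1} ≤ p := by
  rcases subsingleton_or_nontrivial H with hH' | hH'
  · exact (Finite.card_le_one_iff_subsingleton.2 inferInstance).trans (Fact.out : p.Prime).one_lt.le
  have := hH.center_nontrivial
  obtain ⟨z, hz⟩ := exists_prime_orderOf_dvd_card' (G := Subgroup.center H) p
    ((hH.to_subgroup _).card_eq_or_dvd.resolve_left Finite.one_lt_card.ne')
  rw [← Subgroup.orderOf_coe] at hz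
  have commute_z (c : H) (hc : c ∈ Subgroup.zpowers (z : H)) (h : H) : Commute c h :=
    (Subgroup.mem_center_iff.1 (Subgroup.zpowers_le.2 z.2 hc) h).symm
  have mem_zpowers (b : {h : H // h ^ p = 1}) : b.1 ∈ Subgroup.zpowers (z : H) := by
    by_contra hb
    have ne_bot : Subgroup.zpowers (z : H) ≠ ⊥ := fun h => by
      rw [Subgroup.zpowers_eq_bot.1 h, orderOf_one] at hz
      exact (Fact.out : p.Prime).one_lt.ne hz
    obtain ⟨c, hc, hne⟩ := hφ.exists_mul_pow_ne_one ne_bot hb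
      (fun c hc => by rwa [← (commute_z c hc b).eq, mul_inv_cancel_right]) (Fact.out : p.Prime)
    have pow_eq_one : c ^ p = 1 :=
      orderOf_dvd_iff_pow_eq_one.1 (hz ▸ orderOf_dvd_of_mem_zpowers hc)
    exact hne (by rw [(commute_z c hc b).mul_pow, pow_eq_one, b.2, one_mul])
  calc Nat.card {h : H // h ^ p = 1} ≤ Nat.card (Subgroup.zpowers (z : H)) :=
        Nat.card_le_card_of_injective (fun b => ⟨b, mem_zpowers b⟩) fun b b' h =>
          Subtype.ext (Subtype.mk.inj h)
    _ = p := by rw [Nat.card_zpowers, hz]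

theorem isZGroup_of_odd_card (hφ : IsFixedPointFreeAction φ) (hodd : Odd (Nat.card H)) :
    IsZGroup H := by
  rw [isZGroup_iff]
  intro p hp P
  have := Fact.mk hp
  rcases eq_or_ne p 2 with rfl | hp2
  · have two_not_dvd : ¬ 2 ∣ Nat.card P := fun h =>
      hodd.not_two_dvd_nat (h.trans (P : Subgroup H).card_subgroup_dvd_card)
    have card_eq_one := P.isPGroup'.card_eq_or_dvd.resolve_right two_not_dvd
    have : Subsingleton P := Finite.card_le_one_iff_subsingleton.1 card_eq_one.le
    exact isCyclic_of_subsingleton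
  · have hP := hφ.comp_injective (f := (P : Subgroup H).subtype) Subtype.val_injective
    exact isCyclic_of_card_pow_prime_eq_one_le hp2 P.isPGroup'
      (hP.card_pow_prime_eq_one_le P.isPGroup')

theorem center_ne_bot_of_isZGroup [Nontrivial H] [IsZGroup H] (hφ : IsFixedPointFreeAction φ) :
    Subgroup.center H ≠ ⊥ := by
  have := IsZGroup.isCyclic_commutator (G := H)
  obtain ⟨p, hp, p_dvd⟩ := Nat.exists_prime_and_dvd
    (mt Subgroup.index_eq_one.1 (IsZGroup.commutator_lt (G := H)).ne)
  have := Fact.mk hp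
  obtain ⟨b, hb⟩ := exists_prime_orderOf_dvd_card' p
    (p_dvd.trans (commutator H).index_dvd_card)
  have b_pow : b ^ p = 1 := hb ▸ pow_orderOf_eq_one b
  have coprime : p.Coprime (Nat.card (commutator H)) :=
    (IsZGroup.coprime_commutator_index H).symm.coprime_dvd_left p_dvd
  have commute_b {c : H} (hc : c ∈ commutator H) : Commute c b :=
    hφ.commute_of_pow_prime_eq_one hp b_pow
      (fun c hc => Subgroup.Normal.conj_mem inferInstance c hc b) hc
  have b_mem_center : b ∈ Subgroup.center H := by
    rw [Subgroup.mem_center_iff]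
    intro h
    have mem : ⁅h, b⁆ ∈ commutator H :=
      Subgroup.commutator_mem_commutator (Subgroup.mem_top h) (Subgroup.mem_top b)
    have commutator_pow : ⁅h, b⁆ ^ p = 1 := by
      calc ⁅h, b⁆ ^ p = ⁅h, b⁆ ^ p * b ^ p := by rw [b_pow, mul_one]
        _ = (h * b * h⁻¹) ^ p := by
          rw [← (commute_b mem).mul_pow, commutatorElement_def, inv_mul_cancel_right]
        _ = 1 := by rw [conj_pow, b_pow, mul_one, mul_inv_cancel]
    have commutator_eq_one : ⁅h, b⁆ = 1 := orderOf_eq_one_iff.1 <|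
      Nat.eq_one_of_dvd_coprimes coprime (orderOf_dvd_of_pow_eq_one commutator_pow)
        (Subgroup.orderOf_dvd_natCard _ mem)
    exact (commutatorElement_eq_one_iff_commute.1 commutator_eq_one).eq
  intro center_eq_bot
  rw [center_eq_bot, Subgroup.mem_bot] at b_mem_center
  rw [b_mem_center, orderOf_one] at hb
  exact hp.one_lt.ne hb

theorem center_ne_bot [Nontrivial H] (hφ : IsFixedPointFreeAction φ) : Subgroup.center H ≠ ⊥ := by
  rcases Nat.even_or_odd (Nat.card H) with heven | hodd
  · obtain ⟨z, hz, unique⟩ := hφ.existsUnique_orderOf_eq_two heven.two_dvd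
    have z_mem_center := mem_center_of_unique_orderOf fun w hw => unique w (hw.trans hz)
    intro center_eq_bot
    rw [center_eq_bot, Subgroup.mem_bot] at z_mem_center
    simp [z_mem_center] at hz
  · have := hφ.isZGroup_of_odd_card hodd
    exact hφ.center_ne_bot_of_isZGroup

end IsFixedPointFreeAction

end FixedPointFree

section Complements

variable {G : Type*} [Group G]

theorem normalizer_le_normalizer_inf_centralizer (R : Subgroup G) :
    Subgroup.normalizer (R : Set G) ≤
      Subgroup.normalizer (R ⊓ Subgroup.centralizer (R : Set G) : Set G) := by
  refine le_trans (le_inf le_rfl ?_) Subgroup.inf_normalizer_le_normalizer_inf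
  exact (Subgroup.normal_subgroupOf_iff_le_normalizer (Subgroup.centralizer_le_normalizer _)).1
    inferInstance

theorem inf_centralizer_ne_bot_of_isPGroup {p : ℕ} [Fact p.Prime] {R : Subgroup G} [Finite R]
    (hR : IsPGroup p R) (hR₁ : R ≠ ⊥) : R ⊓ Subgroup.centralizer (R : Set G) ≠ ⊥ := by
  have := R.nontrivial_iff_ne_bot.2 hR₁
  have := hR.center_nontrivial
  obtain ⟨z, hz⟩ := exists_ne (1 : Subgroup.center R)
  have z_mem : (z : G) ∈ R ⊓ Subgroup.centralizer (R : Set G) :=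
    ⟨z.1.2, Subgroup.mem_centralizer_iff.2 fun g hg =>
      congrArg Subtype.val (Subgroup.mem_center_iff.1 z.2 ⟨g, hg⟩)⟩
  intro h
  rw [h, Subgroup.mem_bot] at z_mem
  exact hz (Subtype.ext (Subtype.ext z_mem))

theorem exists_le_isComplement'_of_sup_eq_top [Finite G] {K N : Subgroup G} [K.Normal]
    (hK : (Nat.card K).Coprime K.index) (hNK : N ⊔ K = ⊤) :
    ∃ X ≤ N, Subgroup.IsComplement' X K := by
  have relIndex_eq : K.relIndex N = K.index := by
    rw [← Subgroup.relIndex_sup_right, hNK, Subgroup.relIndex_top_right]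
  have coprime : (Nat.card (K.subgroupOf N)).Coprime (K.subgroupOf N).index := by
    rw [← Subgroup.relIndex, relIndex_eq]
    exact hK.coprime_dvd_left (Subgroup.card_comap_dvd_of_injective K N.subtype N.subtype_injective)
  obtain ⟨X, hX⟩ := Subgroup.exists_left_complement'_of_coprime coprime
  refine ⟨X.map N.subtype, Subgroup.map_subtype_le X, ?_⟩
  have card_X : Nat.card (X.map N.subtype) = K.index := by
    rw [Subgroup.card_subtype, ← relIndex_eq, Subgroup.relIndex, ← hX.index_eq_card]
  refine Subgroup.isComplement'_of_card_mul_and_disjoint (by rw [card_X, K.index_mul_card]) ?_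
  rw [Subgroup.disjoint_def]
  rintro _ ⟨x, hx, rfl⟩ hxK
  simpa using Subgroup.disjoint_def.1 hX.disjoint hx hxK

/- Frattini's argument, with `A` the center of a Sylow subgroup of `K`. -/
theorem exists_isComplement'_le_normalizer [Finite G] {K : Subgroup G} [K.Normal]
    (hK : (Nat.card K).Coprime K.index) (hK₁ : K ≠ ⊥) :
    ∃ X A : Subgroup G, Subgroup.IsComplement' X K ∧ IsMulCommutative A ∧ A ≠ ⊥ ∧ A ≤ K ∧
      X ≤ Subgroup.normalizer (A : Set G) := by
  obtain ⟨r, hr, r_dvd⟩ := Nat.exists_prime_and_dvd (mt Subgroup.card_eq_one.1 hK₁)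
  have := Fact.mk hr
  obtain ⟨P⟩ : Nonempty (Sylow r K) := inferInstance
  let R : Subgroup G := (P : Subgroup K).map K.subtype
  have R_ne_bot : R ≠ ⊥ := by
    rw [Ne, Subgroup.map_eq_bot_iff_of_injective _ K.subtype_injective]
    exact P.ne_bot_of_dvd_card r_dvd
  obtain ⟨X, hXR, hXK⟩ := exists_le_isComplement'_of_sup_eq_top hK P.normalizer_sup_eq_top
  refine ⟨X, R ⊓ Subgroup.centralizer (R : Set G), hXK, ?_,
    inf_centralizer_ne_bot_of_isPGroup (P.isPGroup'.map _) R_ne_bot,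
    inf_le_left.trans (Subgroup.map_subtype_le _),
    hXR.trans (normalizer_le_normalizer_inf_centralizer R)⟩
  exact ⟨⟨fun a b => Subtype.ext (Subgroup.mem_centralizer_iff.1 b.2.2 a a.2.1)⟩⟩

theorem isComplement'_of_eq_frobeniusKernelSet [Finite G] {H K : Subgroup G}
    (hK : (K : Set G) = frobeniusKernelSet H)
    (hcard : Nat.card K * Nat.card H = Nat.card G) : Subgroup.IsComplement' H K := by
  refine Subgroup.isComplement'_of_card_mul_and_disjoint (by rw [mul_comm, hcard]) ?_
  rw [Subgroup.disjoint_def]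
  intro x hxH hxK
  rw [← SetLike.mem_coe, hK] at hxK
  exact hxK 1 (by simpa using hxH)

end Complements

namespace IsMalnormal

variable {G : Type*} [Group G] {H : Subgroup G}

theorem eq_one_of_commute (hH : IsMalnormal H) {x k : G} (hx : x ∉ frobeniusKernelSet H)
    (hk : k ∈ frobeniusKernelSet H) (hxk : Commute x k) : k = 1 := by
  obtain ⟨y, hy, hx₁⟩ : ∃ y, y * x * y⁻¹ ∈ H ∧ x ≠ 1 := by simpa [frobeniusKernelSet] using hx
  refine hk y (by_contra fun conj_notMem => hx₁ ?_)
  have conj_eq : y * k * y⁻¹ * (y * x * y⁻¹) * (y * k * y⁻¹)⁻¹ = y * x * y⁻¹ :=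
    by
    rw [mul_inv_eq_iff_eq_mul]
    simp [mul_assoc, hxk.left_comm]
  simpa using hH _ conj_notMem _ hy (by rwa [conj_eq])

variable {K : Subgroup G}

theorem isFixedPointFreeAction_normalizerMonoidHom (hH : IsMalnormal H)
    (hK : (K : Set G) = frobeniusKernelSet H) {X A : Subgroup G} (hX : Disjoint X K) (hA : A ≤ K)
    (hXA : X ≤ Subgroup.normalizer (A : Set G)) :
    IsFixedPointFreeAction (A.normalizerMonoidHom.comp (Subgroup.inclusion hXA)) := by
  intro x hx a ha
  have x_notMem : (x : G) ∉ K := fun h => hx (Subtype.ext (Subgroup.disjoint_def.1 hX x.2 h))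
  rw [← SetLike.mem_coe, hK] at x_notMem
  exact Subtype.ext <| hH.eq_one_of_commute x_notMem (hK ▸ hA a.2)
    (mul_inv_eq_iff_eq_mul.1 (congrArg Subtype.val ha))

theorem exists_isFixedPointFreeAction [Finite G] (hH : IsMalnormal H) (hH' : H ≠ ⊤) :
    ∃ A : Subgroup G, IsMulCommutative A ∧ Nontrivial A ∧
      ∃ φ : H →* MulAut A, IsFixedPointFreeAction φ := by
  obtain ⟨K, hKn, hK, card_mul⟩ := hH.exists_normal_subgroup_eq_frobeniusKernelSet
  have hHK := isComplement'_of_eq_frobeniusKernelSet hK card_mul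
  have K_ne_bot : K ≠ ⊥ := by
    rintro rfl
    exact hH' (Subgroup.isComplement'_bot_right.1 hHK)
  have coprime : (Nat.card K).Coprime K.index := by
    rw [hHK.index_eq_card]
    exact (hH.isFixedPointFreeAction_normalizerMonoidHom hK hHK.disjoint le_rfl
      Subgroup.le_normalizer_of_normal).coprime_card.symm
  obtain ⟨X, A, hXK, hA, hA₁, hAK, hXA⟩ := exists_isComplement'_le_normalizer coprime K_ne_bot
  let e : H ≃* X := hHK.QuotientMulEquiv.symm.trans hXK.QuotientMulEquiv
  have hφ := hH.isFixedPointFreeAction_normalizerMonoidHom hK hXK.disjoint hAK hXA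
  exact ⟨A, hA, A.nontrivial_iff_ne_bot.2 hA₁, _,
    hφ.comp_injective (f := e.toMonoidHom) e.injective⟩

open scoped IsMulCommutative

theorem center_ne_bot [Finite G] [Nontrivial H] (hH : IsMalnormal H) (hH' : H ≠ ⊤) :
    Subgroup.center H ≠ ⊥ := by
  obtain ⟨A, _, _, φ, hφ⟩ := hH.exists_isFixedPointFreeAction hH'
  exact hφ.center_ne_bot

theorem existsUnique_orderOf_eq_two [Finite G] (hH : IsMalnormal H) (hH' : H ≠ ⊤)
    (h2 : 2 ∣ Nat.card H) : ∃! z : H, orderOf z = 2 := by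
  obtain ⟨A, _, _, φ, hφ⟩ := hH.exists_isFixedPointFreeAction hH'
  exact hφ.existsUnique_orderOf_eq_two h2

end IsMalnormal

/-- Every Frobenius complement has non-trivial center; moreover a Frobenius
complement of even order contains a unique involution, which is central in it. -/
theorem frobenius_complement_center_nontrivial
    (G : Type*) [Group G] [Finite G] (H : Subgroup G)
    (hne : H ≠ ⊥) (hpr : H ≠ ⊤)
    (hfrob : ∀ g : G, g ∉ H → ∀ x ∈ H, g * x * g⁻¹ ∈ H → x = 1) :
    (∃ z ∈ H, z ≠ 1 ∧ ∀ h ∈ H, z * h = h * z) ∧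
    (2 ∣ Nat.card H →
      ∃ z : G, (z ∈ H ∧ z ≠ 1 ∧ z * z = 1 ∧ ∀ h ∈ H, z * h = h * z) ∧
        ∀ w : G, w ∈ H → w ≠ 1 → w * w = 1 → w = z) := by
  have hH : IsMalnormal H := hfrob
  have commute_of_mem_center {z : H} (hz : z ∈ Subgroup.center H) :
      ∀ h ∈ H, (z : G) * h = h * z := fun h hh =>
    (congrArg Subtype.val (Subgroup.mem_center_iff.1 hz ⟨h, hh⟩)).symm
  have orderOf_eq_two_iff {w : G} : orderOf w = 2 ↔ w ≠ 1 ∧ w * w = 1 := by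
    rw [orderOf_eq_prime_iff, sq, and_comm]
  constructor
  · have := H.nontrivial_iff_ne_bot.2 hne
    obtain ⟨z, hz⟩ := Subgroup.ne_bot_iff_exists_ne_one.1 (hH.center_ne_bot hpr)
    exact ⟨z, z.1.2, by simpa using hz, commute_of_mem_center z.2⟩
  · intro h2
    obtain ⟨z, hz, unique⟩ := hH.existsUnique_orderOf_eq_two hpr h2
    have z_mem_center := mem_center_of_unique_orderOf fun w hw => unique w (hw.trans hz)
    obtain ⟨z_ne_one, z_mul_self⟩ := orderOf_eq_two_iff.1 ((Subgroup.orderOf_coe z).trans hz)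
    refine ⟨z, ⟨z.2, z_ne_one, z_mul_self, commute_of_mem_center z_mem_center⟩, ?_⟩
    intro w hw w_ne_one w_mul_self
    have orderOf_w := orderOf_eq_two_iff.2 ⟨w_ne_one, w_mul_self⟩
    exact congrArg Subtype.val (unique ⟨w, hw⟩ ((Subgroup.orderOf_mk w hw).trans orderOf_w))
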